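/- In the lattice Pic, the sublattice Q = {v ∈ Pic : (v|D₁) = (v|D₂) = (v|D₃) = 0} is a free ℤ-module of rank ℓ₁ + ℓ₂ + ℓ₃ − 2 (assuming each ℓ_m ≥ 1), and every element of the set B = {α₀, α_i^m} lies in Q. -/

import Mathlib

open Finset

variable (ℓ : Fin 3 → ℕ)

/-- Index type for the basis `h`, `e_i^m` of the Picard lattice. -/
abbrev Idx := Unit ⊕ (Σ m : Fin 3, Fin (ℓ m))

/-- The Picard lattice `ℤ h ⊕ ⊕ ℤ e_i^m`, as integer vectors. -/
abbrev Pic := Idx ℓ → ℤ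

/-- Sign of a basis vector: `+1` for `h`, `-1` for the `e_i^m`. -/
def sgn : Idx ℓ → ℤ
  | .inl _ => 1
  | .inr _ => -1

/-- The intersection form: `(h|h)=1`, `(e_i^m|e_j^n) = -δ_{ij}δ_{mn}`, `(h|e_i^m)=0`. -/
def form (v w : Pic ℓ) : ℤ := ∑ i, sgn ℓ i * v i * w i

/-- The class `h` of a line. -/
def h : Pic ℓ := Pi.single (.inl ()) 1

/-- The class `e_i^m` of the exceptional curve over `P_i^m`. -/
def e (m : Fin 3) (i : Fin (ℓ m)) : Pic ℓ := Pi.single (.inr ⟨m, i⟩) 1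

/-- The class `D_m = h - ∑_i e_i^m` of the line `L_m`. -/
def D (m : Fin 3) : Pic ℓ := h ℓ - ∑ i : Fin (ℓ m), e ℓ m i

/-- The simple root `α₀ = h - e₁¹ - e₁² - e₁³`. -/
def α₀ (hℓ : ∀ m, 0 < ℓ m) : Pic ℓ :=
  h ℓ - e ℓ 0 ⟨0, hℓ 0⟩ - e ℓ 1 ⟨0, hℓ 1⟩ - e ℓ 2 ⟨0, hℓ 2⟩

/-- The simple root `α_i^m = e_i^m - e_{i+1}^m` (0-based indexing). -/
def aroot (m : Fin 3) (i : ℕ) (hi : i + 1 < ℓ m) : Pic ℓ :=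
  e ℓ m ⟨i, Nat.lt_of_succ_lt hi⟩ - e ℓ m ⟨i + 1, hi⟩

/-- The reflection `R_α(v) = v + (v|α) α`. -/
def reflect (α v : Pic ℓ) : Pic ℓ := v + form ℓ v α • α

/-- The linear functional `v ↦ (v | D_m)` on `Pic`. -/
def Dfunc (m : Fin 3) : Pic ℓ →ₗ[ℤ] ℤ where
  toFun v := form ℓ v (D ℓ m)
  map_add' x y := by
    simp [form, add_mul, mul_add, Finset.sum_add_distrib]
  map_smul' c x := by
    simp only [form, smul_eq_mul, Pi.smul_apply, RingHom.id_apply, Finset.mul_sum]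
    exact Finset.sum_congr rfl fun i _ => by ring

/-- The root sublattice `Q = {v : (v|D₁) = (v|D₂) = (v|D₃) = 0}`. -/
def Q : Submodule ℤ (Pic ℓ) := ⨅ m : Fin 3, LinearMap.ker (Dfunc ℓ m)

theorem Dfunc_eq (m : Fin 3) (v : Pic ℓ) :
    Dfunc ℓ m v = v (.inl ()) + ∑ i : Fin (ℓ m), v (.inr ⟨m, i⟩) := by
  have hD1 : D ℓ m (.inl ()) = 1 := by
    simp [D, h, e, Finset.sum_apply]
  have hD2 : ∀ (n : Fin 3) (j : Fin (ℓ n)), D ℓ m (.inr ⟨n, j⟩) = if n = m then -1 else 0 := by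
    intro n j
    by_cases hn : n = m
    · subst hn
      simp [D, h, e, Finset.sum_apply, Pi.single_apply]
    · simp [D, h, e, Finset.sum_apply, Pi.single_apply, hn]
  show form ℓ v (D ℓ m) = _
  unfold form
  rw [Fintype.sum_sum_type, Fintype.sum_sigma]
  simp only [hD2, Finset.univ_unique, Finset.sum_singleton, sgn]
  rw [Finset.sum_eq_single m]
  · simp [hD1]
  · intro n _ hn
    simp [hn]
  · simp

theorem mem_Q_iff (v : Pic ℓ) :
    v ∈ Q ℓ ↔ ∀ m, v (.inl ()) + ∑ i : Fin (ℓ m), v (.inr ⟨m, i⟩) = 0 := by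
  simp [Q, Submodule.mem_iInf, Dfunc_eq]

theorem Dfunc_h (m : Fin 3) : Dfunc ℓ m (h ℓ) = 1 := by
  simp [Dfunc_eq, h]

theorem Dfunc_e (m n : Fin 3) (j : Fin (ℓ n)) :
    Dfunc ℓ m (e ℓ n j) = if m = n then 1 else 0 := by
  rw [Dfunc_eq]
  by_cases hn : m = n
  · subst hn
    simp [e, Pi.single_apply]
  · simp [e, Pi.single_apply, hn]

/-- `Q` is free of rank `ℓ₁ + ℓ₂ + ℓ₃ - 2` and contains all the simple roots
`α₀` and `α_i^m`. -/
theorem root_lattice_rank (hℓ : ∀ m, 0 < ℓ m) :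
    Module.Free ℤ (Q ℓ) ∧
    Module.finrank ℤ (Q ℓ) = ℓ 0 + ℓ 1 + ℓ 2 - 2 ∧
    α₀ ℓ hℓ ∈ Q ℓ ∧
    (∀ (m : Fin 3) (i : ℕ) (hi : i + 1 < ℓ m), aroot ℓ m i hi ∈ Q ℓ) := by
  refine ⟨inferInstance, ?_, ?_, ?_⟩
  · have hker : Q ℓ = LinearMap.ker (LinearMap.pi (Dfunc ℓ)) := by
      rw [LinearMap.ker_pi]; rfl
    have hsurj : LinearMap.range (LinearMap.pi (Dfunc ℓ)) = ⊤ := by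
      rw [LinearMap.range_eq_top]
      intro w
      refine ⟨∑ n : Fin 3, w n • e ℓ n ⟨0, hℓ n⟩, ?_⟩
      funext m
      rw [LinearMap.pi_apply, map_sum]
      simp only [map_smul, Dfunc_e]
      simp
    have hrn := Submodule.finrank_quotient_add_finrank (LinearMap.ker (LinearMap.pi (Dfunc ℓ)))
    rw [(LinearMap.pi (Dfunc ℓ)).quotKerEquivRange.finrank_eq, hsurj, ← hker, finrank_top, Module.finrank_fintype_fun_eq_card,
      Module.finrank_fintype_fun_eq_card] at hrn
    simp [Fin.sum_univ_three] at hrn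
    omega
  · simp only [Q, Submodule.mem_iInf, LinearMap.mem_ker]
    intro m
    simp only [α₀, map_sub, Dfunc_h, Dfunc_e]
    fin_cases m <;> simp
  · intro m i hi
    simp only [Q, Submodule.mem_iInf, LinearMap.mem_ker]
    intro n
    simp [aroot, map_sub, Dfunc_e]
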